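/- arXiv:2110.03911 — 6 statements merged into one kernel-verified Lean document; each statement's English description precedes it below -/
import Mathlib

section
/- For all τ, t ∈ [a,b] one has |G(τ,t)| ≤ (ψ(b)−ψ(a))^{α+β−1}/Γ(α+β); i.e., the Green function G is uniformly bounded on [a,b]×[a,b] by L^{α+β−1}/Γ(α+β). -/
open MeasureTheory Set

/-- The Green function of the sequential fractional boundary value problem. -/
noncomputable def G (a b α β : ℝ) (ψ : ℝ → ℝ) (τ t : ℝ) : ℝ :=
  if τ ≤ t then
    (ψ t - ψ a) ^ β * (ψ b - ψ τ) ^ (α + β - 1) /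
        (Real.Gamma (α + β) * (ψ b - ψ a) ^ β) -
      (ψ t - ψ τ) ^ (α + β - 1) / Real.Gamma (α + β)
  else
    (ψ t - ψ a) ^ β * (ψ b - ψ τ) ^ (α + β - 1) /
      (Real.Gamma (α + β) * (ψ b - ψ a) ^ β)

/-!
Up to the factor `1 / Γ(α + β)`, `G` is the difference of a boundary term and a truncated kernel.
As `ψ` is monotone, all its increments lie in `[0, L]` with `L = ψ b - ψ a`, so the boundary term
and the kernel both lie in `[0, L ^ (α + β - 1)]`; hence so does the absolute value of their
difference, whatever its sign.
-/

theorem strictMonoOn_of_hasDerivAt_pos {D : Set ℝ} (hD : Convex ℝ D) {f f' : ℝ → ℝ}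
    (hf : ∀ x ∈ D, HasDerivAt f (f' x) x) (hf' : ∀ x ∈ interior D, 0 < f' x) :
    StrictMonoOn f D :=
  strictMonoOn_of_hasDerivWithinAt_pos hD (HasDerivAt.continuousOn hf)
    (fun x hx ↦ (hf x (interior_subset hx)).hasDerivWithinAt) hf'

theorem sub_mem_Icc_of_monotoneOn {ι E : Type*} [Preorder ι] [AddCommGroup E] [PartialOrder E]
    [IsOrderedAddMonoid E] {f : ι → E} {a b x y : ι} (hf : MonotoneOn f (Icc a b))
    (hx : x ∈ Icc a b) (hy : y ∈ Icc a b) (hxy : x ≤ y) :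
    f y - f x ∈ Icc 0 (f b - f a) := by
  have hab : a ≤ b := hx.1.trans hx.2
  exact ⟨sub_nonneg.2 (hf hx hy hxy),
    sub_le_sub (hf hy (right_mem_Icc.2 hab) hy.2) (hf (left_mem_Icc.2 hab) hx hx.1)⟩

theorem rpow_mem_Icc_rpow {x L s : ℝ} (hx : x ∈ Icc 0 L) (hs : 0 ≤ s) :
    x ^ s ∈ Icc 0 (L ^ s) :=
  ⟨Real.rpow_nonneg hx.1 s, Real.rpow_le_rpow hx.1 hx.2 hs⟩

theorem rpow_mul_rpow_div_rpow_mem_Icc {x y L r s : ℝ} (hL : 0 < L) (hx : x ∈ Icc 0 L)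
    (hy : y ∈ Icc 0 L) (hr : 0 ≤ r) (hs : 0 ≤ s) :
    x ^ r * y ^ s / L ^ r ∈ Icc 0 (L ^ s) := by
  obtain ⟨hxr, hxLr⟩ := rpow_mem_Icc_rpow hx hr
  obtain ⟨hys, hyLs⟩ := rpow_mem_Icc_rpow hy hs
  have hLr : 0 < L ^ r := Real.rpow_pos_of_pos hL r
  refine ⟨by positivity, (div_le_iff₀' hLr).2 ?_⟩
  exact mul_le_mul hxLr hyLs hys hLr.le

theorem G_eq_sub_div_Gamma (a b α β : ℝ) (ψ : ℝ → ℝ) (τ t : ℝ) :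
    G a b α β ψ τ t =
      ((ψ t - ψ a) ^ β * (ψ b - ψ τ) ^ (α + β - 1) / (ψ b - ψ a) ^ β -
        if τ ≤ t then (ψ t - ψ τ) ^ (α + β - 1) else 0) / Real.Gamma (α + β) := by
  unfold G
  split_ifs
  · rw [sub_div, div_div, mul_comm (Real.Gamma _)]
  · rw [sub_zero, div_div, mul_comm (Real.Gamma _)]

theorem green_function_uniform_bound_general {a b α β : ℝ} (hβ : 0 ≤ β) (hαβ : 1 ≤ α + β)
    {ψ : ℝ → ℝ} (hψ : MonotoneOn ψ (Icc a b)) (hψab : ψ a < ψ b)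
    {τ t : ℝ} (hτ : τ ∈ Icc a b) (ht : t ∈ Icc a b) :
    |G a b α β ψ τ t| ≤ (ψ b - ψ a) ^ (α + β - 1) / Real.Gamma (α + β) := by
  have hab : a ≤ b := ht.1.trans ht.2
  have hs : 0 ≤ α + β - 1 := sub_nonneg.2 hαβ
  have hΓ : 0 < Real.Gamma (α + β) := Real.Gamma_pos_of_pos (by linarith)
  have hboundary : (ψ t - ψ a) ^ β * (ψ b - ψ τ) ^ (α + β - 1) / (ψ b - ψ a) ^ β ∈
      Icc 0 ((ψ b - ψ a) ^ (α + β - 1)) :=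
    rpow_mul_rpow_div_rpow_mem_Icc (sub_pos.2 hψab)
      (sub_mem_Icc_of_monotoneOn hψ (left_mem_Icc.2 hab) ht ht.1)
      (sub_mem_Icc_of_monotoneOn hψ hτ (right_mem_Icc.2 hab) hτ.2) hβ hs
  have hkernel : (if τ ≤ t then (ψ t - ψ τ) ^ (α + β - 1) else 0) ∈
      Icc 0 ((ψ b - ψ a) ^ (α + β - 1)) := by
    split_ifs with hτt
    · exact rpow_mem_Icc_rpow (sub_mem_Icc_of_monotoneOn hψ hτ ht hτt) hs
    · exact left_mem_Icc.2 (Real.rpow_nonneg (sub_pos.2 hψab).le _)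
  rw [G_eq_sub_div_Gamma, abs_div, abs_of_pos hΓ]
  gcongr
  exact abs_sub_le_of_nonneg_of_le hboundary.1 hboundary.2 hkernel.1 hkernel.2

theorem green_function_uniform_bound
    (a b α β : ℝ) (hab : a < b)
    (hα0 : 0 < α) (hα1 : α ≤ 1) (hβ0 : 0 < β) (hβ1 : β ≤ 1) (hαβ : 1 < α + β)
    (ψ ψd : ℝ → ℝ)
    (hψ : ∀ t ∈ Set.Icc a b, HasDerivAt ψ (ψd t) t)
    (hψd_cont : ContinuousOn ψd (Set.Icc a b))
    (hψd_pos : ∀ t ∈ Set.Icc a b, 0 < ψd t) :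
    ∀ τ ∈ Set.Icc a b, ∀ t ∈ Set.Icc a b,
      |G a b α β ψ τ t| ≤ (ψ b - ψ a) ^ (α + β - 1) / Real.Gamma (α + β) := by
  have hmono : StrictMonoOn ψ (Icc a b) := strictMonoOn_of_hasDerivAt_pos (convex_Icc a b) hψ
    fun t ht ↦ hψd_pos t (interior_subset ht)
  exact fun τ hτ t ht ↦ green_function_uniform_bound_general hβ0.le hαβ.le hmono.monotoneOn
    (hmono (left_mem_Icc.2 hab.le) (right_mem_Icc.2 hab.le) hab) hτ ht
end

section
/- The maximum of g₂(τ,t) over the region {(τ,t) : a ≤ t ≤ τ ≤ b} equals (L^{α+β−1}/Γ(α+β)) · β^β·(α+β−1)^{α+β−1}/(α+2β−1)^{α+2β−1}, and it is attained at the point t = τ = τ₀, where τ₀ ∈ (a,b) is the unique point with ψ(τ₀) = (β·ψ(b) + (α+β−1)·ψ(a))/(α+2β−1). -/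
open MeasureTheory Set

/-- The function `g₂(τ,t) = C·(ψ(t)−ψ(a))^β·(ψ(b)−ψ(τ))^{α+β−1}`,
with `C = 1/(Γ(α+β)·(ψ(b)−ψ(a))^β)`. -/
noncomputable def g₂ (a b α β : ℝ) (ψ : ℝ → ℝ) (τ t : ℝ) : ℝ :=
  (ψ t - ψ a) ^ β * (ψ b - ψ τ) ^ (α + β - 1) /
    (Real.Gamma (α + β) * (ψ b - ψ a) ^ β)

/-!
Put `L = ψ b - ψ a` and `q = α + β - 1`. In the normalized increments `x = (ψ t - ψ a) / L` and
`y = (ψ b - ψ τ) / L`, the function `g₂` is `L ^ q / Γ(α + β)` times `x ^ β * y ^ q`, and `t ≤ τ`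
becomes `x + y ≤ 1`. Weighted AM-GM applied to `x / β` and `y / q` bounds `x ^ β * y ^ q`, with
equality when `x / β = y / q` and `x + y = 1`; the latter forces `ψ t = ψ τ`.
-/

section WeightedAMGM

variable {p q x y : ℝ}

theorem rpow_mul_rpow_le_mul_add_rpow (hp : 0 < p) (hq : 0 < q) (hx : 0 ≤ x) (hy : 0 ≤ y) :
    x ^ p * y ^ q ≤ p ^ p * q ^ q / (p + q) ^ (p + q) * (x + y) ^ (p + q) := by
  have hpq : 0 < p + q := add_pos hp hq
  have am_gm : (x / p) ^ (p / (p + q)) * (y / q) ^ (q / (p + q)) ≤ (x + y) / (p + q) :=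
    calc (x / p) ^ (p / (p + q)) * (y / q) ^ (q / (p + q))
      _ ≤ p / (p + q) * (x / p) + q / (p + q) * (y / q) :=
        Real.geom_mean_le_arith_mean2_weighted (by positivity) (by positivity) (by positivity)
          (by positivity) (by field_simp)
      _ = (x + y) / (p + q) := by field_simp
  have rpow_am_gm : (x / p) ^ p * (y / q) ^ q ≤ ((x + y) / (p + q)) ^ (p + q) :=
    calc (x / p) ^ p * (y / q) ^ q
      _ = ((x / p) ^ (p / (p + q)) * (y / q) ^ (q / (p + q))) ^ (p + q) := by
        rw [Real.mul_rpow (by positivity) (by positivity), ← Real.rpow_mul (by positivity),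
          ← Real.rpow_mul (by positivity), div_mul_cancel₀ _ hpq.ne', div_mul_cancel₀ _ hpq.ne']
      _ ≤ ((x + y) / (p + q)) ^ (p + q) := by gcongr
  calc x ^ p * y ^ q
    _ = p ^ p * q ^ q * ((x / p) ^ p * (y / q) ^ q) := by
      rw [Real.div_rpow hx hp.le, Real.div_rpow hy hq.le]
      field_simp
    _ ≤ p ^ p * q ^ q * ((x + y) / (p + q)) ^ (p + q) := by gcongr
    _ = p ^ p * q ^ q / (p + q) ^ (p + q) * (x + y) ^ (p + q) := by
      rw [Real.div_rpow (add_nonneg hx hy) hpq.le]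
      ring

theorem rpow_mul_rpow_le_of_add_le_one (hp : 0 < p) (hq : 0 < q) (hx : 0 ≤ x) (hy : 0 ≤ y)
    (hxy : x + y ≤ 1) : x ^ p * y ^ q ≤ p ^ p * q ^ q / (p + q) ^ (p + q) :=
  (rpow_mul_rpow_le_mul_add_rpow hp hq hx hy).trans <|
    mul_le_of_le_one_right (by positivity) (Real.rpow_le_one (by positivity) hxy (by positivity))

theorem div_add_rpow_mul_div_add_rpow (hp : 0 ≤ p) (hq : 0 ≤ q) :
    (p / (p + q)) ^ p * (q / (p + q)) ^ q = p ^ p * q ^ q / (p + q) ^ (p + q) := by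
  have hpq : 0 ≤ p + q := add_nonneg hp hq
  rw [Real.div_rpow hp hpq, Real.div_rpow hq hpq, Real.rpow_add_of_nonneg hpq hp hq,
    div_mul_div_comm]

end WeightedAMGM

section WeightedMean

variable {𝕜 : Type*} [Field 𝕜] {p q u v : 𝕜}

theorem weighted_mean_mem_Ioo [LinearOrder 𝕜] [IsStrictOrderedRing 𝕜] (hp : 0 < p) (hq : 0 < q)
    (huv : u < v) : (p * v + q * u) / (p + q) ∈ Ioo u v := by
  rw [← openSegment_eq_Ioo huv, mem_openSegment_iff_div]
  exact ⟨q, p, hq, hp, by simp only [smul_eq_mul]; ring⟩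

theorem weighted_mean_sub_div_sub (hpq : p + q ≠ 0) (huv : u ≠ v) :
    ((p * v + q * u) / (p + q) - u) / (v - u) = p / (p + q) := by
  have : v - u ≠ 0 := sub_ne_zero.2 huv.symm
  field_simp
  ring

theorem sub_weighted_mean_div_sub (hpq : p + q ≠ 0) (huv : u ≠ v) :
    (v - (p * v + q * u) / (p + q)) / (v - u) = q / (p + q) := by
  have : v - u ≠ 0 := sub_ne_zero.2 huv.symm
  field_simp
  ring

end WeightedMean

section

variable {a b α β τ t : ℝ} {ψ : ℝ → ℝ}

theorem g₂_eq_mul_rpow_mul_rpow (hab : ψ a < ψ b) (ht : ψ a ≤ ψ t) (hτ : ψ τ ≤ ψ b) :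
    g₂ a b α β ψ τ t = (ψ b - ψ a) ^ (α + β - 1) / Real.Gamma (α + β) *
      (((ψ t - ψ a) / (ψ b - ψ a)) ^ β * ((ψ b - ψ τ) / (ψ b - ψ a)) ^ (α + β - 1)) := by
  have hL : 0 < ψ b - ψ a := sub_pos.2 hab
  rw [g₂, Real.div_rpow (sub_nonneg.2 ht) hL.le, Real.div_rpow (sub_nonneg.2 hτ) hL.le]
  field_simp

theorem g₂_le (hβ : 0 < β) (hαβ : 1 < α + β) (hab : ψ a < ψ b) (hat : ψ a ≤ ψ t)
    (htτ : ψ t ≤ ψ τ) (hτb : ψ τ ≤ ψ b) :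
    g₂ a b α β ψ τ t ≤
      (ψ b - ψ a) ^ (α + β - 1) / Real.Gamma (α + β) *
        (β ^ β * (α + β - 1) ^ (α + β - 1) / (α + 2 * β - 1) ^ (α + 2 * β - 1)) := by
  have hL : 0 < ψ b - ψ a := sub_pos.2 hab
  have hΓ : 0 < Real.Gamma (α + β) := Real.Gamma_pos_of_pos (zero_lt_one.trans hαβ)
  have hx : 0 ≤ (ψ t - ψ a) / (ψ b - ψ a) := div_nonneg (sub_nonneg.2 hat) hL.le
  have hy : 0 ≤ (ψ b - ψ τ) / (ψ b - ψ a) := div_nonneg (sub_nonneg.2 hτb) hL.le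
  have hxy : (ψ t - ψ a) / (ψ b - ψ a) + (ψ b - ψ τ) / (ψ b - ψ a) ≤ 1 := by
    rw [← add_div, div_le_one hL]
    linarith
  rw [g₂_eq_mul_rpow_mul_rpow hab hat hτb,
    show α + 2 * β - 1 = β + (α + β - 1) by ring]
  exact mul_le_mul_of_nonneg_left
    (rpow_mul_rpow_le_of_add_le_one hβ (sub_pos.2 hαβ) hx hy hxy)
    (div_nonneg (Real.rpow_nonneg hL.le _) hΓ.le)

theorem g₂_max_general (hab : a < b) (hβ : 0 < β) (hαβ : 1 < α + β)
    (hψ : ContinuousOn ψ (Icc a b)) (hmono : StrictMonoOn ψ (Icc a b)) :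
    ∃ τ₀ ∈ Ioo a b,
      ψ τ₀ = (β * ψ b + (α + β - 1) * ψ a) / (α + 2 * β - 1) ∧
      (∀ τ' ∈ Ioo a b,
        ψ τ' = (β * ψ b + (α + β - 1) * ψ a) / (α + 2 * β - 1) → τ' = τ₀) ∧
      g₂ a b α β ψ τ₀ τ₀ =
        (ψ b - ψ a) ^ (α + β - 1) / Real.Gamma (α + β) *
          (β ^ β * (α + β - 1) ^ (α + β - 1) / (α + 2 * β - 1) ^ (α + 2 * β - 1)) ∧
      ∀ τ t, a ≤ t → t ≤ τ → τ ≤ b →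
        g₂ a b α β ψ τ t ≤
          (ψ b - ψ a) ^ (α + β - 1) / Real.Gamma (α + β) *
            (β ^ β * (α + β - 1) ^ (α + β - 1) / (α + 2 * β - 1) ^ (α + 2 * β - 1)) := by
  have ha : a ∈ Icc a b := left_mem_Icc.2 hab.le
  have hb : b ∈ Icc a b := right_mem_Icc.2 hab.le
  have hψab : ψ a < ψ b := hmono ha hb hab
  have hq : 0 < α + β - 1 := sub_pos.2 hαβ
  have hsum : α + 2 * β - 1 = β + (α + β - 1) := by ring
  have hne : β + (α + β - 1) ≠ 0 := (add_pos hβ hq).ne'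
  have hmem : (β * ψ b + (α + β - 1) * ψ a) / (α + 2 * β - 1) ∈ Ioo (ψ a) (ψ b) :=
    hsum ▸ weighted_mean_mem_Ioo hβ hq hψab
  obtain ⟨τ₀, hτ₀, hψτ₀⟩ := intermediate_value_Ioo hab.le hψ hmem
  refine ⟨τ₀, hτ₀, hψτ₀, fun τ' hτ' hψτ' ↦ ?unique, ?value, fun τ t hat htτ hτb ↦ ?bound⟩
  case unique =>
    exact hmono.injOn (Ioo_subset_Icc_self hτ') (Ioo_subset_Icc_self hτ₀) (hψτ'.trans hψτ₀.symm)
  case value =>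
    rw [g₂_eq_mul_rpow_mul_rpow hψab (hψτ₀ ▸ hmem.1.le) (hψτ₀ ▸ hmem.2.le), hψτ₀, hsum,
      weighted_mean_sub_div_sub hne hψab.ne, sub_weighted_mean_div_sub hne hψab.ne,
      div_add_rpow_mul_div_add_rpow hβ.le hq.le]
  case bound =>
    have ht : t ∈ Icc a b := ⟨hat, htτ.trans hτb⟩
    have hτ : τ ∈ Icc a b := ⟨hat.trans htτ, hτb⟩
    exact g₂_le hβ hαβ hψab (hmono.monotoneOn ha ht hat) (hmono.monotoneOn ht hτ htτ)
      (hmono.monotoneOn hτ hb hτb)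

end

theorem g₂_max
    (a b α β : ℝ) (hab : a < b)
    (hα0 : 0 < α) (hα1 : α ≤ 1) (hβ0 : 0 < β) (hβ1 : β ≤ 1) (hαβ : 1 < α + β)
    (ψ ψd : ℝ → ℝ)
    (hψ : ∀ t ∈ Set.Icc a b, HasDerivAt ψ (ψd t) t)
    (hψd_cont : ContinuousOn ψd (Set.Icc a b))
    (hψd_pos : ∀ t ∈ Set.Icc a b, 0 < ψd t) :
    ∃ τ₀ ∈ Set.Ioo a b,
      ψ τ₀ = (β * ψ b + (α + β - 1) * ψ a) / (α + 2 * β - 1) ∧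
      (∀ τ' ∈ Set.Ioo a b,
        ψ τ' = (β * ψ b + (α + β - 1) * ψ a) / (α + 2 * β - 1) → τ' = τ₀) ∧
      g₂ a b α β ψ τ₀ τ₀ =
        (ψ b - ψ a) ^ (α + β - 1) / Real.Gamma (α + β) *
          (β ^ β * (α + β - 1) ^ (α + β - 1) / (α + 2 * β - 1) ^ (α + 2 * β - 1)) ∧
      ∀ τ t, a ≤ t → t ≤ τ → τ ≤ b →
        g₂ a b α β ψ τ t ≤
          (ψ b - ψ a) ^ (α + β - 1) / Real.Gamma (α + β) *
            (β ^ β * (α + β - 1) ^ (α + β - 1) / (α + 2 * β - 1) ^ (α + 2 * β - 1)) := by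
  exact g₂_max_general hab hβ0 hαβ (HasDerivAt.continuousOn hψ) <|
    strictMonoOn_of_hasDerivWithinAt_pos (convex_Icc a b) (HasDerivAt.continuousOn hψ)
      (fun t ht ↦ (hψ t (interior_subset ht)).hasDerivWithinAt)
      fun t ht ↦ hψd_pos t (interior_subset ht)
end

section
/- For each fixed t ∈ [a,b], the function τ ↦ g₁(τ,t) is monotone nondecreasing on the interval [a,t]; consequently, for each t, max over τ ∈ [a,t] of |g₁(τ,t)| equals max{|g₁(a,t)|, |g₁(t,t)|}. -/
open MeasureTheory Set

/-- The function `g₁(τ,t) = C·(ψ(t)−ψ(a))^β·(ψ(b)−ψ(τ))^{α+β−1} − D·(ψ(t)−ψ(τ))^{α+β−1}`,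
with `C = 1/(Γ(α+β)·(ψ(b)−ψ(a))^β)` and `D = 1/Γ(α+β)`. -/
noncomputable def g₁ (a b α β : ℝ) (ψ : ℝ → ℝ) (τ t : ℝ) : ℝ :=
  (ψ t - ψ a) ^ β * (ψ b - ψ τ) ^ (α + β - 1) /
      (Real.Gamma (α + β) * (ψ b - ψ a) ^ β) -
    (ψ t - ψ τ) ^ (α + β - 1) / Real.Gamma (α + β)

/-!
Put `p = α + β - 1 ∈ [0, 1]`, `x = ψ t - ψ τ` and `h = ψ b - ψ t ≥ 0`. Up to the factor
`1 / Γ(α + β)`, the function `g₁` is `c (x + h) ^ p - x ^ p` with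
`c = ((ψ t - ψ a) / (ψ b - ψ a)) ^ β ≤ 1`. Writing it as
`((x + h) ^ p - x ^ p) - (1 - c) (x + h) ^ p`, the increment is antitone in `x` because `x ^ p` is
concave, and `(x + h) ^ p` is monotone; as `x` decreases with `τ`, the function `g₁` increases.
-/

theorem sub_le_sub_of_concaveOn {𝕜 E : Type*} [Field 𝕜] [LinearOrder 𝕜] [IsStrictOrderedRing 𝕜]
    [AddCommGroup E] [PartialOrder E] [IsOrderedAddMonoid E] [Module 𝕜 E]
    {s : Set 𝕜} {f : 𝕜 → E} (hf : ConcaveOn 𝕜 s f) {x y h : 𝕜}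
    (hx : x ∈ s) (hyh : y + h ∈ s) (hxy : x ≤ y) (hh : 0 ≤ h) :
    f (y + h) - f y ≤ f (x + h) - f x := by
  obtain hd | hd : 0 = y - x + h ∨ 0 < y - x + h := (by linarith : 0 ≤ y - x + h).eq_or_lt
  · obtain rfl : h = 0 := by linarith
    simp only [add_zero, sub_self, le_refl]
  -- `x + h` and `y` divide the segment from `x` to `y + h` in mirrored ratios.
  set w := (y - x) / (y - x + h)
  set v := h / (y - x + h)
  have hw : 0 ≤ w := div_nonneg (sub_nonneg.2 hxy) hd.le
  have hv : 0 ≤ v := div_nonneg hh hd.le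
  have hwv : w + v = 1 := by rw [← add_div, div_self hd.ne']
  have hxh_eq : w • x + v • (y + h) = x + h := by
    simp only [smul_eq_mul, w, v]
    field_simp
    ring
  have hy_eq : v • x + w • (y + h) = y := by
    simp only [smul_eq_mul, w, v]
    field_simp
    ring
  have hf_xh : w • f x + v • f (y + h) ≤ f (x + h) := hxh_eq ▸ hf.2 hx hyh hw hv hwv
  have hf_y : v • f x + w • f (y + h) ≤ f y :=
    (hf.2 hx hyh hv hw (by rwa [add_comm])).trans_eq (congrArg f hy_eq)
  rw [sub_le_sub_iff]
  calc f (y + h) + f x = (w + v) • f (y + h) + (w + v) • f x := by rw [hwv, one_smul, one_smul]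
    _ = (w • f x + v • f (y + h)) + (v • f x + w • f (y + h)) := by module
    _ ≤ f (x + h) + f y := add_le_add hf_xh hf_y

theorem antitoneOn_mul_add_sub_of_concaveOn {𝕜 : Type*} [Field 𝕜] [LinearOrder 𝕜]
    [IsStrictOrderedRing 𝕜] {f : 𝕜 → 𝕜} {x₀ c h : 𝕜}
    (hf : ConcaveOn 𝕜 (Ici x₀) f) (hf_mono : MonotoneOn f (Ici x₀)) (hc : c ≤ 1) (hh : 0 ≤ h) :
    AntitoneOn (fun x => c * f (x + h) - f x) (Ici x₀) := by
  intro x hx y hy hxy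
  have hxh : x + h ∈ Ici x₀ := le_add_of_le_of_nonneg hx hh
  have hyh : y + h ∈ Ici x₀ := le_add_of_le_of_nonneg hy hh
  have h_incr : f (y + h) - f y ≤ f (x + h) - f x := sub_le_sub_of_concaveOn hf hx hyh hxy hh
  have h_mono : (1 - c) * f (x + h) ≤ (1 - c) * f (y + h) :=
    mul_le_mul_of_nonneg_left (hf_mono hxh hyh (by gcongr)) (sub_nonneg.2 hc)
  linear_combination h_incr + h_mono

theorem isGreatest_image_abs_Icc_of_monotoneOn {ι G : Type*} [Preorder ι] [AddCommGroup G]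
    [LinearOrder G] [IsOrderedAddMonoid G] {f : ι → G} {a b : ι} (hab : a ≤ b)
    (hf : MonotoneOn f (Icc a b)) :
    IsGreatest ((fun x => |f x|) '' Icc a b) (max |f a| |f b|) := by
  have ha : a ∈ Icc a b := left_mem_Icc.2 hab
  have hb : b ∈ Icc a b := right_mem_Icc.2 hab
  refine ⟨?_, ?_⟩
  · rcases max_choice |f a| |f b| with h | h <;> rw [h]
    exacts [mem_image_of_mem _ ha, mem_image_of_mem _ hb]
  · rintro _ ⟨x, hx, rfl⟩
    exact abs_le_max_abs_abs (hf ha hx hx.1) (hf hx hb hx.2)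

theorem strictMonoOn_Icc_of_hasDerivAt_pos {a b : ℝ} {f f' : ℝ → ℝ}
    (hf : ∀ x ∈ Icc a b, HasDerivAt f (f' x) x) (hf' : ∀ x ∈ Icc a b, 0 < f' x) :
    StrictMonoOn f (Icc a b) :=
  strictMonoOn_of_hasDerivWithinAt_pos (convex_Icc a b)
    (fun x hx => (hf x hx).continuousAt.continuousWithinAt)
    (fun x hx => (hf x (interior_subset hx)).hasDerivWithinAt)
    (fun x hx => hf' x (interior_subset hx))

theorem g₁_eq_div_Gamma (a b α β : ℝ) (ψ : ℝ → ℝ) (τ t : ℝ) :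
    g₁ a b α β ψ τ t =
      ((ψ t - ψ a) ^ β / (ψ b - ψ a) ^ β * (ψ t - ψ τ + (ψ b - ψ t)) ^ (α + β - 1) -
        (ψ t - ψ τ) ^ (α + β - 1)) / Real.Gamma (α + β) := by
  rw [g₁, sub_add_sub_cancel']
  ring

theorem monotoneOn_g₁ {a b α β : ℝ} (hβ : 0 ≤ β) (h_one_le : 1 ≤ α + β) (h_le_two : α + β ≤ 2)
    {ψ : ℝ → ℝ} (hψ : MonotoneOn ψ (Icc a b)) (hψab : ψ a < ψ b) {t : ℝ} (ht : t ∈ Icc a b) :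
    MonotoneOn (fun τ => g₁ a b α β ψ τ t) (Icc a t) := by
  have hab : a ≤ b := ht.1.trans ht.2
  have hψat : ψ a ≤ ψ t := hψ (left_mem_Icc.2 hab) ht ht.1
  have hψtb : ψ t ≤ ψ b := hψ ht (right_mem_Icc.2 hab) ht.2
  have h_ratio : (ψ t - ψ a) ^ β / (ψ b - ψ a) ^ β ≤ 1 :=
    (div_le_one (Real.rpow_pos_of_pos (sub_pos.2 hψab) β)).2
      (Real.rpow_le_rpow (sub_nonneg.2 hψat) (by gcongr) hβ)
  have h_gap_anti : AntitoneOn (fun τ => ψ t - ψ τ) (Icc a t) := fun x hx y hy hxy =>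
    sub_le_sub_left (hψ (Icc_subset_Icc_right ht.2 hx) (Icc_subset_Icc_right ht.2 hy) hxy) _
  have h_gap_nonneg : MapsTo (fun τ => ψ t - ψ τ) (Icc a t) (Ici 0) := fun τ hτ =>
    sub_nonneg.2 (hψ (Icc_subset_Icc_right ht.2 hτ) ht hτ.2)
  have h_profile := antitoneOn_mul_add_sub_of_concaveOn
    (Real.concaveOn_rpow (p := α + β - 1) (by linarith) (by linarith))
    (Real.monotoneOn_rpow_Ici_of_exponent_nonneg (by linarith)) h_ratio (sub_nonneg.2 hψtb)
  intro x hx y hy hxy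
  simp only [g₁_eq_div_Gamma]
  exact div_le_div_of_nonneg_right (h_profile.comp h_gap_anti h_gap_nonneg hx hy hxy)
    (Real.Gamma_nonneg_of_nonneg (by linarith))

theorem g₁_monotone_and_abs_max_general {a b α β : ℝ} (hβ : 0 ≤ β) (h_one_le : 1 ≤ α + β)
    (h_le_two : α + β ≤ 2) {ψ : ℝ → ℝ} (hψ : MonotoneOn ψ (Icc a b)) (hψab : ψ a < ψ b) :
    ∀ t ∈ Icc a b,
      MonotoneOn (fun τ => g₁ a b α β ψ τ t) (Icc a t) ∧
      IsGreatest ((fun τ => |g₁ a b α β ψ τ t|) '' Icc a t)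
        (max |g₁ a b α β ψ a t| |g₁ a b α β ψ t t|) := by
  intro t ht
  have h_mono := monotoneOn_g₁ hβ h_one_le h_le_two hψ hψab ht
  exact ⟨h_mono, isGreatest_image_abs_Icc_of_monotoneOn ht.1 h_mono⟩

theorem g₁_monotone_and_abs_max
    (a b α β : ℝ) (hab : a < b)
    (hα0 : 0 < α) (hα1 : α ≤ 1) (hβ0 : 0 < β) (hβ1 : β ≤ 1) (hαβ : 1 < α + β)
    (ψ ψd : ℝ → ℝ)
    (hψ : ∀ t ∈ Set.Icc a b, HasDerivAt ψ (ψd t) t)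
    (hψd_cont : ContinuousOn ψd (Set.Icc a b))
    (hψd_pos : ∀ t ∈ Set.Icc a b, 0 < ψd t) :
    ∀ t ∈ Set.Icc a b,
      MonotoneOn (fun τ => g₁ a b α β ψ τ t) (Set.Icc a t) ∧
      IsGreatest ((fun τ => |g₁ a b α β ψ τ t|) '' Set.Icc a t)
        (max |g₁ a b α β ψ a t| |g₁ a b α β ψ t t|) := by
  have hψ_mono : StrictMonoOn ψ (Icc a b) := strictMonoOn_Icc_of_hasDerivAt_pos hψ hψd_pos
  exact g₁_monotone_and_abs_max_general hβ0.le hαβ.le (by linarith) hψ_mono.monotoneOn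
    (hψ_mono (left_mem_Icc.2 hab.le) (right_mem_Icc.2 hab.le) hab)
end

section
/- The function h(t) = g₁(a,t) satisfies h(t) ≤ 0 for all t ∈ [a,b], and h(a) = h(b) = 0. Moreover, if α < 1, then the maximum of |h| over [a,b] equals (L^{α+β−1}/Γ(α+β)) · ((1−α)/β) · ((α+β−1)/β)^{(α+β−1)/(1−α)}, attained at the unique t₀ ∈ (a,b) with ψ(t₀) = ψ(a) + ((α+β−1)/β)^{1/(1−α)}·L. -/
open MeasureTheory Set

/-- The function `h(t) = g₁(a,t) = C·(ψ(t)−ψ(a))^β·L^{α+β−1} − D·(ψ(t)−ψ(a))^{α+β−1}`,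
with `L = ψ(b)−ψ(a)`, `C = 1/(Γ(α+β)·L^β)` and `D = 1/Γ(α+β)`. -/
noncomputable def hFun (a b α β : ℝ) (ψ : ℝ → ℝ) (t : ℝ) : ℝ :=
  (ψ t - ψ a) ^ β * (ψ b - ψ a) ^ (α + β - 1) /
      (Real.Gamma (α + β) * (ψ b - ψ a) ^ β) -
    (ψ t - ψ a) ^ (α + β - 1) / Real.Gamma (α + β)

/-! Put `L = ψ b - ψ a`, `p = α + β - 1` and `q = β`. If `ψ t = ψ a + u * L`, then
`h(t) = -(L ^ p / Γ(α + β)) * (u ^ p - u ^ q)`, and `u ^ p - u ^ q ≥ 0` for `u ∈ [0, 1]` because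
`p ≤ q`. When `p < q`, the critical point of `u ^ p - u ^ q` is `v = (p / q) ^ (1 / (q - p))`;
weighted AM-GM for `u ^ q` and `v ^ q`, with weights `p / q` and `1 - p / q`, shows that the maximum
is attained there. -/

section RpowSubRpow

variable {p q r u v : ℝ}

lemma rpow_eq_mul_rpow_of_rpow_sub_eq (hv : 0 < v) (hvr : v ^ (q - p) = r) :
    v ^ q = r * v ^ p := by
  rw [← hvr, ← Real.rpow_add hv, sub_add_cancel]

lemma rpow_sub_rpow_le_of_rpow_sub_eq_div (hp : 0 < p) (hpq : p ≤ q) (hu : 0 ≤ u) (hv : 0 < v)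
    (hvpq : v ^ (q - p) = p / q) : u ^ p - u ^ q ≤ v ^ p - v ^ q := by
  have hq : 0 < q := hp.trans_le hpq
  have hr : 0 < p / q := div_pos hp hq
  have hr' : 0 ≤ 1 - p / q := sub_nonneg.2 ((div_le_one hq).2 hpq)
  have hup : (u ^ q) ^ (p / q) = u ^ p := by rw [← Real.rpow_mul hu, mul_div_cancel₀ p hq.ne']
  have hvp : (v ^ q) ^ (1 - p / q) = p / q := by
    rw [← Real.rpow_mul hv.le, mul_one_sub, mul_div_cancel₀ p hq.ne', hvpq]
  have amgm : u ^ p * (p / q) ≤ p / q * u ^ q + (1 - p / q) * v ^ q := by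
    simpa only [hup, hvp] using Real.geom_mean_le_arith_mean2_weighted hr.le hr'
      (Real.rpow_nonneg hu q) (Real.rpow_nonneg hv.le q) (add_sub_cancel _ _)
  refine le_of_mul_le_mul_left ?_ hr
  calc p / q * (u ^ p - u ^ q) ≤ (1 - p / q) * v ^ q := by linarith
    _ = p / q * (v ^ p - v ^ q) := by rw [rpow_eq_mul_rpow_of_rpow_sub_eq hv hvpq]; ring

lemma isMaxOn_rpow_sub_rpow (hp : 0 < p) (hpq : p < q) :
    IsMaxOn (fun u : ℝ ↦ u ^ p - u ^ q) (Ici 0) ((p / q) ^ (1 / (q - p))) := by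
  have hr : 0 < p / q := div_pos hp (hp.trans hpq)
  refine fun u hu ↦ rpow_sub_rpow_le_of_rpow_sub_eq_div hp hpq.le hu (Real.rpow_pos_of_pos hr _) ?_
  rw [one_div, Real.rpow_inv_rpow hr.le (sub_pos.2 hpq).ne']

lemma rpow_one_div_sub_rpow_sub_rpow (hr : 0 < r) (hpq : p ≠ q) :
    (r ^ (1 / (q - p))) ^ p - (r ^ (1 / (q - p))) ^ q = (1 - r) * r ^ (p / (q - p)) := by
  have hvr : (r ^ (1 / (q - p))) ^ (q - p) = r := by
    rw [one_div, Real.rpow_inv_rpow hr.le (sub_ne_zero.2 hpq.symm)]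
  rw [rpow_eq_mul_rpow_of_rpow_sub_eq (Real.rpow_pos_of_pos hr _) hvr, ← Real.rpow_mul hr.le,
    one_div_mul_eq_div]
  ring

end RpowSubRpow

lemma rpow_mem_Ioo_zero_one {x y : ℝ} (hx : x ∈ Ioo 0 1) (hy : 0 < y) : x ^ y ∈ Ioo 0 1 :=
  ⟨Real.rpow_pos_of_pos hx.1 y, Real.rpow_lt_one hx.1.le hx.2 hy⟩

lemma rpow_div_Gamma_nonneg {x y s : ℝ} (hx : 0 ≤ x) (hs : 0 ≤ s) : 0 ≤ x ^ y / Real.Gamma s :=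
  div_nonneg (Real.rpow_nonneg hx y) (Real.Gamma_nonneg_of_nonneg hs)

section Segment

variable {𝕜 : Type*} [Field 𝕜] [LinearOrder 𝕜] [IsStrictOrderedRing 𝕜] {x y z u : 𝕜}

lemma exists_mem_Icc_eq_add_mul (hz : z ∈ Icc x y) :
    ∃ u ∈ Icc (0 : 𝕜) 1, z = x + u * (y - x) := by
  rw [← segment_eq_Icc (hz.1.trans hz.2), segment_eq_image'] at hz
  obtain ⟨u, hu, huz⟩ := hz
  exact ⟨u, hu, huz.symm⟩

lemma add_mul_mem_Ioo (hxy : x < y) (hu : u ∈ Ioo 0 1) : x + u * (y - x) ∈ Ioo x y := by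
  rw [← openSegment_eq_Ioo hxy, openSegment_eq_image']
  exact mem_image_of_mem _ hu

end Segment

section HFun

variable {a b α β t t₀ u : ℝ} {ψ : ℝ → ℝ}

lemma hFun_left (hβ : β ≠ 0) (hαβ : α + β ≠ 1) : hFun a b α β ψ a = 0 := by
  simp [hFun, Real.zero_rpow hβ, Real.zero_rpow (sub_ne_zero.2 hαβ)]

lemma hFun_of_eq_add_mul (hL : ψ a < ψ b) (hu : 0 ≤ u) (ht : ψ t = ψ a + u * (ψ b - ψ a)) :
    hFun a b α β ψ t =
      -((ψ b - ψ a) ^ (α + β - 1) / Real.Gamma (α + β) * (u ^ (α + β - 1) - u ^ β)) := by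
  have hL' : 0 < ψ b - ψ a := sub_pos.2 hL
  have hLβ : (ψ b - ψ a) ^ β ≠ 0 := (Real.rpow_pos_of_pos hL' β).ne'
  rw [hFun, ht, add_sub_cancel_left, Real.mul_rpow hu hL'.le, Real.mul_rpow hu hL'.le,
    mul_right_comm, mul_div_mul_right _ _ hLβ]
  ring

lemma hFun_right (hL : ψ a < ψ b) : hFun a b α β ψ b = 0 := by
  simp [hFun_of_eq_add_mul hL zero_le_one (t := b) (by ring)]

lemma hFun_nonpos (hα : α ≤ 1) (hαβ : 1 < α + β) (hL : ψ a < ψ b)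
    (ht : ψ t ∈ Icc (ψ a) (ψ b)) : hFun a b α β ψ t ≤ 0 := by
  obtain ⟨u, hu, hut⟩ := exists_mem_Icc_eq_add_mul ht
  have hpow : u ^ β ≤ u ^ (α + β - 1) :=
    Real.rpow_le_rpow_of_exponent_ge' hu.1 hu.2 (by linarith) (by linarith)
  rw [hFun_of_eq_add_mul hL hu.1 hut, neg_nonpos]
  exact mul_nonneg (rpow_div_Gamma_nonneg (sub_pos.2 hL).le (by linarith)) (sub_nonneg.2 hpow)

lemma isMinOn_hFun (hα : α < 1) (hαβ : 1 < α + β) (hL : ψ a < ψ b)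
    (ht₀ : ψ t₀ = ψ a + ((α + β - 1) / β) ^ (1 / (1 - α)) * (ψ b - ψ a)) :
    IsMinOn (hFun a b α β ψ) (ψ ⁻¹' Ici (ψ a)) t₀ := by
  refine isMinOn_iff.2 fun t ht ↦ ?_
  have hL' : 0 < ψ b - ψ a := sub_pos.2 hL
  obtain ⟨u, hu, hut⟩ : ∃ u, 0 ≤ u ∧ ψ t = ψ a + u * (ψ b - ψ a) :=
    ⟨(ψ t - ψ a) / (ψ b - ψ a), div_nonneg (sub_nonneg.2 ht) hL'.le, by
      rw [div_mul_cancel₀ _ hL'.ne', add_sub_cancel]⟩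
  have hr : 0 ≤ (α + β - 1) / β := div_nonneg (by linarith) (by linarith)
  have hmax := isMaxOn_rpow_sub_rpow (p := α + β - 1) (q := β) (by linarith) (by linarith) hu
  rw [show β - (α + β - 1) = 1 - α by ring] at hmax
  rw [hFun_of_eq_add_mul hL (Real.rpow_nonneg hr _) ht₀, hFun_of_eq_add_mul hL hu hut]
  exact neg_le_neg <| mul_le_mul_of_nonneg_left hmax <|
    rpow_div_Gamma_nonneg hL'.le (by linarith)

lemma hFun_of_eq_add_div_rpow_mul (hα : α < 1) (hαβ : 1 < α + β) (hL : ψ a < ψ b)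
    (ht₀ : ψ t₀ = ψ a + ((α + β - 1) / β) ^ (1 / (1 - α)) * (ψ b - ψ a)) :
    hFun a b α β ψ t₀ =
      -((ψ b - ψ a) ^ (α + β - 1) / Real.Gamma (α + β) * ((1 - α) / β) *
        ((α + β - 1) / β) ^ ((α + β - 1) / (1 - α))) := by
  have hβ : 0 < β := by linarith
  have hr : 0 < (α + β - 1) / β := div_pos (by linarith) hβ
  have hval := rpow_one_div_sub_rpow_sub_rpow (p := α + β - 1) (q := β) hr (by linarith)
  rw [show β - (α + β - 1) = 1 - α by ring,
    show 1 - (α + β - 1) / β = (1 - α) / β by field_simp; ring] at hval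
  rw [hFun_of_eq_add_mul hL (Real.rpow_nonneg hr.le _) ht₀, hval, mul_assoc]

end HFun

theorem hFun_nonpos_and_abs_max_general
    (a b α β : ℝ) (hab : a < b) (hα1 : α ≤ 1) (hαβ : 1 < α + β) (ψ : ℝ → ℝ)
    (hψ_cont : ContinuousOn ψ (Set.Icc a b)) (hψ_mono : StrictMonoOn ψ (Set.Icc a b)) :
    (∀ t ∈ Set.Icc a b, hFun a b α β ψ t ≤ 0) ∧
    hFun a b α β ψ a = 0 ∧ hFun a b α β ψ b = 0 ∧
    (α < 1 →
      ∃ t₀ ∈ Set.Ioo a b,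
        ψ t₀ = ψ a + ((α + β - 1) / β) ^ ((1 : ℝ) / (1 - α)) * (ψ b - ψ a) ∧
        (∀ t' ∈ Set.Ioo a b,
          ψ t' = ψ a + ((α + β - 1) / β) ^ ((1 : ℝ) / (1 - α)) * (ψ b - ψ a) →
            t' = t₀) ∧
        |hFun a b α β ψ t₀| =
          (ψ b - ψ a) ^ (α + β - 1) / Real.Gamma (α + β) * ((1 - α) / β) *
            ((α + β - 1) / β) ^ ((α + β - 1) / (1 - α)) ∧
        ∀ t ∈ Set.Icc a b, |hFun a b α β ψ t| ≤ |hFun a b α β ψ t₀|) := by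
  have ha : a ∈ Icc a b := left_mem_Icc.2 hab.le
  have hb : b ∈ Icc a b := right_mem_Icc.2 hab.le
  have hL : ψ a < ψ b := hψ_mono ha hb hab
  have hmaps : MapsTo ψ (Icc a b) (Icc (ψ a) (ψ b)) := hψ_mono.monotoneOn.mapsTo_Icc
  have hnonpos : ∀ t ∈ Icc a b, hFun a b α β ψ t ≤ 0 := fun t ht ↦
    hFun_nonpos hα1 hαβ hL (hmaps ht)
  refine ⟨hnonpos, hFun_left (by linarith) hαβ.ne', hFun_right hL, fun hα ↦ ?_⟩
  have hβ : 0 < β := by linarith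
  have hr : (α + β - 1) / β ∈ Ioo 0 1 :=
    ⟨div_pos (by linarith) hβ, (div_lt_one hβ).2 (by linarith)⟩
  obtain ⟨t₀, ht₀, hψt₀⟩ := intermediate_value_Ioo hab.le hψ_cont <|
    add_mul_mem_Ioo hL (rpow_mem_Ioo_zero_one hr (one_div_pos.2 (sub_pos.2 hα)))
  have ht₀' : t₀ ∈ Icc a b := Ioo_subset_Icc_self ht₀
  refine ⟨t₀, ht₀, hψt₀, fun t' ht' hψt' ↦ ?unique, ?value, fun t ht ↦ ?max⟩
  case unique =>
    exact hψ_mono.injOn (Ioo_subset_Icc_self ht') ht₀' (hψt'.trans hψt₀.symm)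
  case value =>
    rw [abs_of_nonpos (hnonpos t₀ ht₀'), hFun_of_eq_add_div_rpow_mul hα hαβ hL hψt₀, neg_neg]
  case max =>
    rw [abs_of_nonpos (hnonpos t ht), abs_of_nonpos (hnonpos t₀ ht₀')]
    exact neg_le_neg (isMinOn_hFun hα hαβ hL hψt₀ (hmaps ht).1)

theorem hFun_nonpos_and_abs_max
    (a b α β : ℝ) (hab : a < b)
    (hα0 : 0 < α) (hα1 : α ≤ 1) (hβ0 : 0 < β) (hβ1 : β ≤ 1) (hαβ : 1 < α + β)
    (ψ ψd : ℝ → ℝ)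
    (hψ : ∀ t ∈ Set.Icc a b, HasDerivAt ψ (ψd t) t)
    (hψd_cont : ContinuousOn ψd (Set.Icc a b))
    (hψd_pos : ∀ t ∈ Set.Icc a b, 0 < ψd t) :
    (∀ t ∈ Set.Icc a b, hFun a b α β ψ t ≤ 0) ∧
    hFun a b α β ψ a = 0 ∧ hFun a b α β ψ b = 0 ∧
    (α < 1 →
      ∃ t₀ ∈ Set.Ioo a b,
        ψ t₀ = ψ a + ((α + β - 1) / β) ^ ((1 : ℝ) / (1 - α)) * (ψ b - ψ a) ∧
        (∀ t' ∈ Set.Ioo a b,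
          ψ t' = ψ a + ((α + β - 1) / β) ^ ((1 : ℝ) / (1 - α)) * (ψ b - ψ a) →
            t' = t₀) ∧
        |hFun a b α β ψ t₀| =
          (ψ b - ψ a) ^ (α + β - 1) / Real.Gamma (α + β) * ((1 - α) / β) *
            ((α + β - 1) / β) ^ ((α + β - 1) / (1 - α)) ∧
        ∀ t ∈ Set.Icc a b, |hFun a b α β ψ t| ≤ |hFun a b α β ψ t₀|) := by
  exact hFun_nonpos_and_abs_max_general a b α β hab hα1 hαβ ψ (HasDerivAt.continuousOn hψ)
    (strictMonoOn_of_hasDerivWithinAt_pos (convex_Icc a b) (HasDerivAt.continuousOn hψ)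
      (fun t ht ↦ (hψ t (interior_subset ht)).hasDerivWithinAt)
      fun t ht ↦ hψd_pos t (interior_subset ht))
end

section
/- Suppose q: (a,b) → ℝ is measurable and nonnegative with t ↦ ψ'(t)q(t) in L¹(a,b), φ: ℝ → (0,∞) is nondecreasing and concave, |f(t,x)| ≤ q(t)·φ(|x|) for all t ∈ (a,b) and x ∈ ℝ, and |𝒢(x)| ≤ κ·‖x‖ for all x ∈ C([a,b],ℝ) with some κ ∈ (0,1). If x is a mild solution of the problem such that t ↦ f(t,x(t)) is measurable on (a,b), then (1−κ)·‖x‖ ≤ G_max · (∫_a^b ψ'(τ)q(τ) dτ) · φ(‖x‖), where G_max = L^{α+β−1}/Γ(α+β). -/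
open MeasureTheory Set

/-- The supremum norm of a function over the interval `[a,b]`. -/
noncomputable def supNorm (a b : ℝ) (x : ℝ → ℝ) : ℝ :=
  ⨆ t : Set.Icc a b, |x ↑t|

/-! The Green function is a difference of two numbers in `[0, L ^ (α + β - 1) / Γ(α + β)]`, because
`((ψ t - ψ a) / L) ^ β ≤ 1`; hence `|G|` is bounded by the right endpoint. Taking absolute values in
the integral equation gives `|x t| ≤ κ * ‖x‖ + G_max * (∫ ψ' q) * φ ‖x‖` for every `t`, and it
remains to take the supremum over `t`. -/

/-- A mild solution of the boundary value problem with nonlinearity `f` and nonlocal boundary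
functional `𝒢`, where `ψd` stands for the derivative of `ψ`. Measurability of `t ↦ f t (x t)` is
part of the notion: without it the integral would be `0` by convention. -/
structure IsMildSolution (a b α β : ℝ) (ψ ψd : ℝ → ℝ) (f : ℝ → ℝ → ℝ) (𝒢 : (ℝ → ℝ) → ℝ)
    (x : ℝ → ℝ) : Prop where
  continuousOn : ContinuousOn x (Icc a b)
  aestronglyMeasurable : AEStronglyMeasurable (fun t => f t (x t)) (volume.restrict (Ioo a b))
  eq_add_integral : ∀ t ∈ Icc a b,
    x t = ((ψ t - ψ a) / (ψ b - ψ a)) ^ β * 𝒢 x +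
      ∫ τ in a..b, G a b α β ψ τ t * ψd τ * f τ (x τ)

section SupNorm

variable {a b C t : ℝ} {x : ℝ → ℝ}

theorem abs_le_supNorm (hx : ContinuousOn x (Icc a b)) (ht : t ∈ Icc a b) :
    |x t| ≤ supNorm a b x := by
  obtain ⟨C, hC⟩ := isCompact_Icc.exists_bound_of_continuousOn hx
  have hbdd : BddAbove (range fun s : Icc a b => |x s|) :=
    ⟨C, forall_mem_range.2 fun s => hC s s.2⟩
  exact le_ciSup hbdd ⟨t, ht⟩

theorem supNorm_le (hab : a ≤ b) (hC : ∀ t ∈ Icc a b, |x t| ≤ C) : supNorm a b x ≤ C :=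
  haveI : Nonempty (Icc a b) := (nonempty_Icc.2 hab).to_subtype
  ciSup_le fun t => hC t t.2

end SupNorm

theorem abs_integral_mul_mul_le {a b M : ℝ} {k w g p : ℝ → ℝ} (hab : a ≤ b)
    (hk : ∀ τ ∈ Ioo a b, |k τ| ≤ M) (hw : ∀ τ ∈ Ioo a b, 0 ≤ w τ)
    (hg : ∀ τ ∈ Ioo a b, |g τ| ≤ p τ)
    (hwp : IntervalIntegrable (fun τ => w τ * p τ) volume a b) :
    |∫ τ in a..b, k τ * w τ * g τ| ≤ M * ∫ τ in a..b, w τ * p τ := by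
  have hbound : ∀ τ ∈ Ioo a b, ‖k τ * w τ * g τ‖ ≤ M * (w τ * p τ) := fun τ hτ =>
    calc ‖k τ * w τ * g τ‖ = |k τ| * (w τ * |g τ|) := by
          rw [Real.norm_eq_abs, abs_mul, abs_mul, abs_of_nonneg (hw τ hτ), mul_assoc]
      _ ≤ M * (w τ * p τ) :=
          mul_le_mul (hk τ hτ) (mul_le_mul_of_nonneg_left (hg τ hτ) (hw τ hτ))
            (mul_nonneg (hw τ hτ) (abs_nonneg _)) ((abs_nonneg _).trans (hk τ hτ))
  rw [← intervalIntegral.integral_const_mul, ← Real.norm_eq_abs]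
  refine intervalIntegral.norm_integral_le_of_norm_le hab ?_ (hwp.const_mul M)
  filter_upwards [Ioo_ae_eq_Ioc.mem_iff] with τ hτ hmem
  exact hbound τ (hτ.2 hmem)

section Green

variable {a b α β t τ : ℝ} {ψ : ℝ → ℝ}

theorem div_rpow_mem_Icc_of_monotoneOn (hψ : MonotoneOn ψ (Icc a b)) (hβ : 0 ≤ β)
    (ht : t ∈ Icc a b) : ((ψ t - ψ a) / (ψ b - ψ a)) ^ β ∈ Icc 0 1 := by
  have hab : a ≤ b := ht.1.trans ht.2
  have hat : ψ a ≤ ψ t := hψ (left_mem_Icc.2 hab) ht ht.1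
  have htb : ψ t ≤ ψ b := hψ ht (right_mem_Icc.2 hab) ht.2
  have hratio : 0 ≤ (ψ t - ψ a) / (ψ b - ψ a) :=
    div_nonneg (sub_nonneg.2 hat) (sub_nonneg.2 (hat.trans htb))
  exact ⟨Real.rpow_nonneg hratio β,
    Real.rpow_le_one hratio (div_le_one_of_le₀ (by linarith) (by linarith)) hβ⟩

theorem rpow_div_Gamma_mem_Icc {γ r L : ℝ} (hγ : 1 ≤ γ) (hr : r ∈ Icc 0 L) :
    r ^ (γ - 1) / Real.Gamma γ ∈ Icc 0 (L ^ (γ - 1) / Real.Gamma γ) := by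
  have hΓ : 0 ≤ Real.Gamma γ := Real.Gamma_nonneg_of_nonneg (zero_le_one.trans hγ)
  exact ⟨div_nonneg (Real.rpow_nonneg hr.1 _) hΓ,
    div_le_div_of_nonneg_right (Real.rpow_le_rpow hr.1 hr.2 (sub_nonneg.2 hγ)) hΓ⟩

theorem G_eq_mul_sub_ite (ht : ψ a ≤ ψ t) (hb : ψ a ≤ ψ b) :
    G a b α β ψ τ t =
      ((ψ t - ψ a) / (ψ b - ψ a)) ^ β * ((ψ b - ψ τ) ^ (α + β - 1) / Real.Gamma (α + β)) -
        if τ ≤ t then (ψ t - ψ τ) ^ (α + β - 1) / Real.Gamma (α + β) else 0 := by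
  rw [Real.div_rpow (sub_nonneg.2 ht) (sub_nonneg.2 hb), div_mul_div_comm,
    mul_comm (_ ^ β) (Real.Gamma _), G]
  split_ifs
  · rfl
  · exact (sub_zero _).symm

theorem abs_G_le (hψ : MonotoneOn ψ (Icc a b)) (hβ : 0 ≤ β) (hαβ : 1 ≤ α + β)
    (hτ : τ ∈ Icc a b) (ht : t ∈ Icc a b) :
    |G a b α β ψ τ t| ≤ (ψ b - ψ a) ^ (α + β - 1) / Real.Gamma (α + β) := by
  have ha : a ∈ Icc a b := left_mem_Icc.2 (ht.1.trans ht.2)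
  have hb : b ∈ Icc a b := right_mem_Icc.2 (ht.1.trans ht.2)
  have haτ : ψ a ≤ ψ τ := hψ ha hτ hτ.1
  have hτb : ψ τ ≤ ψ b := hψ hτ hb hτ.2
  have hat : ψ a ≤ ψ t := hψ ha ht ht.1
  have htb : ψ t ≤ ψ b := hψ ht hb ht.2
  obtain ⟨hweight_nonneg, hweight_le⟩ := div_rpow_mem_Icc_of_monotoneOn hψ hβ ht
  obtain ⟨hend_nonneg, hend_le⟩ := rpow_div_Gamma_mem_Icc hαβ
    (show ψ b - ψ τ ∈ Icc 0 (ψ b - ψ a) from ⟨by linarith, by linarith⟩)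
  have hinner : (if τ ≤ t then (ψ t - ψ τ) ^ (α + β - 1) / Real.Gamma (α + β) else 0) ∈
      Icc 0 ((ψ b - ψ a) ^ (α + β - 1) / Real.Gamma (α + β)) := by
    split_ifs with hτt
    · exact rpow_div_Gamma_mem_Icc hαβ ⟨sub_nonneg.2 (hψ hτ ht hτt), by linarith⟩
    · exact left_mem_Icc.2 (hend_nonneg.trans hend_le)
  rw [G_eq_mul_sub_ite hat (hat.trans htb)]
  exact abs_sub_le_of_nonneg_of_le (mul_nonneg hweight_nonneg hend_nonneg)
    ((mul_le_of_le_one_left hend_nonneg hweight_le).trans hend_le) hinner.1 hinner.2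

end Green

section MildSolution

variable {a b α β : ℝ} {ψ ψd : ℝ → ℝ} {f : ℝ → ℝ → ℝ} {𝒢 : (ℝ → ℝ) → ℝ} {x : ℝ → ℝ}

theorem IsMildSolution.supNorm_le_add_integral {p : ℝ → ℝ}
    (hx : IsMildSolution a b α β ψ ψd f 𝒢 x) (hab : a ≤ b) (hβ : 0 ≤ β) (hαβ : 1 ≤ α + β)
    (hψ_mono : MonotoneOn ψ (Icc a b)) (hψd_nonneg : ∀ τ ∈ Ioo a b, 0 ≤ ψd τ)
    (hfp : ∀ τ ∈ Ioo a b, |f τ (x τ)| ≤ p τ)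
    (hp : IntervalIntegrable (fun τ => ψd τ * p τ) volume a b) :
    supNorm a b x ≤ |𝒢 x| +
      (ψ b - ψ a) ^ (α + β - 1) / Real.Gamma (α + β) * ∫ τ in a..b, ψd τ * p τ := by
  refine supNorm_le hab fun t ht => ?_
  rw [hx.eq_add_integral t ht]
  refine (abs_add_le _ _).trans (add_le_add ?boundary ?integral)
  case boundary =>
    obtain ⟨hweight_nonneg, hweight_le⟩ := div_rpow_mem_Icc_of_monotoneOn hψ_mono hβ ht
    rw [abs_mul, abs_of_nonneg hweight_nonneg]
    exact mul_le_of_le_one_left (abs_nonneg _) hweight_le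
  case integral =>
    exact abs_integral_mul_mul_le hab
      (fun τ hτ => abs_G_le hψ_mono hβ hαβ (Ioo_subset_Icc_self hτ) ht) hψd_nonneg hfp hp

theorem mild_solution_norm_estimate_general {κ : ℝ} {q φ : ℝ → ℝ}
    (hab : a < b) (hβ : 0 < β) (hαβ : 1 ≤ α + β)
    (hψ_mono : StrictMonoOn ψ (Icc a b)) (hψ : ∀ t ∈ Ioo a b, HasDerivAt ψ (ψd t) t)
    (hq_nonneg : ∀ t ∈ Ioo a b, 0 ≤ q t)
    (hqL1 : IntervalIntegrable (fun t => ψd t * q t) volume a b)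
    (hφ_mono : MonotoneOn φ (Ici 0))
    (hf : ∀ t ∈ Ioo a b, ∀ u : ℝ, |f t u| ≤ q t * φ |u|)
    (h𝒢 : ∀ y : ℝ → ℝ, ContinuousOn y (Icc a b) → |𝒢 y| ≤ κ * supNorm a b y)
    (hx : IsMildSolution a b α β ψ ψd f 𝒢 x) :
    (1 - κ) * supNorm a b x ≤
      (ψ b - ψ a) ^ (α + β - 1) / Real.Gamma (α + β) *
        (∫ τ in a..b, ψd τ * q τ) * φ (supNorm a b x) := by
  have hψd_nonneg (τ : ℝ) (hτ : τ ∈ Ioo a b) : 0 ≤ ψd τ := by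
    rw [← (hψ τ hτ).hasDerivWithinAt.derivWithin (isOpen_Ioo.uniqueDiffWithinAt hτ)]
    exact (hψ_mono.monotoneOn.mono Ioo_subset_Icc_self).derivWithin_nonneg
  have hfq (τ : ℝ) (hτ : τ ∈ Ioo a b) : |f τ (x τ)| ≤ q τ * φ (supNorm a b x) := by
    have hxτ : |x τ| ≤ supNorm a b x := abs_le_supNorm hx.continuousOn (Ioo_subset_Icc_self hτ)
    have hφx : φ |x τ| ≤ φ (supNorm a b x) :=
      hφ_mono (mem_Ici.2 (abs_nonneg _)) (mem_Ici.2 ((abs_nonneg _).trans hxτ)) hxτ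
    exact (hf τ hτ (x τ)).trans (mul_le_mul_of_nonneg_left hφx (hq_nonneg τ hτ))
  have hqφ : IntervalIntegrable (fun τ => ψd τ * (q τ * φ (supNorm a b x))) volume a b := by
    simpa only [mul_assoc] using hqL1.mul_const (φ (supNorm a b x))
  have hnorm := hx.supNorm_le_add_integral hab.le hβ.le hαβ hψ_mono.monotoneOn hψd_nonneg hfq hqφ
  simp only [← mul_assoc, intervalIntegral.integral_mul_const] at hnorm
  linarith [h𝒢 x hx.continuousOn]

end MildSolution

theorem mild_solution_norm_estimate
    (a b α β κ : ℝ) (hab : a < b)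
    (hα0 : 0 < α) (hα1 : α ≤ 1) (hβ0 : 0 < β) (hβ1 : β ≤ 1) (hαβ : 1 < α + β)
    (ψ ψd : ℝ → ℝ)
    (hψ : ∀ t ∈ Set.Icc a b, HasDerivAt ψ (ψd t) t)
    (hψd_cont : ContinuousOn ψd (Set.Icc a b))
    (hψd_pos : ∀ t ∈ Set.Icc a b, 0 < ψd t)
    (q φ : ℝ → ℝ) (f : ℝ → ℝ → ℝ) (𝒢 : (ℝ → ℝ) → ℝ)
    (hq_meas : AEStronglyMeasurable q (volume.restrict (Set.Ioo a b)))
    (hq_nonneg : ∀ t ∈ Set.Ioo a b, 0 ≤ q t)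
    (hqL1 : IntervalIntegrable (fun t => ψd t * q t) volume a b)
    (hφ_pos : ∀ s, 0 < φ s) (hφ_mono : Monotone φ)
    (hφ_concave : ConcaveOn ℝ Set.univ φ)
    (hf : ∀ t ∈ Set.Ioo a b, ∀ u : ℝ, |f t u| ≤ q t * φ |u|)
    (hκ0 : 0 < κ) (hκ1 : κ < 1)
    (h𝒢 : ∀ x : ℝ → ℝ, ContinuousOn x (Set.Icc a b) → |𝒢 x| ≤ κ * supNorm a b x)
    (x : ℝ → ℝ) (hx_cont : ContinuousOn x (Set.Icc a b))
    (hfx_meas : AEStronglyMeasurable (fun t => f t (x t)) (volume.restrict (Set.Ioo a b)))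
    (hmild : ∀ t ∈ Set.Icc a b,
      x t = ((ψ t - ψ a) / (ψ b - ψ a)) ^ β * 𝒢 x +
        ∫ τ in a..b, G a b α β ψ τ t * ψd τ * f τ (x τ)) :
    (1 - κ) * supNorm a b x ≤
      (ψ b - ψ a) ^ (α + β - 1) / Real.Gamma (α + β) *
        (∫ τ in a..b, ψd τ * q τ) * φ (supNorm a b x) := by
  have hψ_strictMono : StrictMonoOn ψ (Icc a b) :=
    strictMonoOn_of_hasDerivWithinAt_pos (convex_Icc a b) (HasDerivAt.continuousOn hψ)
      (fun t ht => (hψ t (interior_subset ht)).hasDerivWithinAt)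
      fun t ht => hψd_pos t (interior_subset ht)
  exact mild_solution_norm_estimate_general hab hβ0 hαβ.le hψ_strictMono
    (fun t ht => hψ t (Ioo_subset_Icc_self ht)) hq_nonneg hqL1 (hφ_mono.monotoneOn _) hf h𝒢
    ⟨hx_cont, hfx_meas, hmild⟩
end

section
/- (Lyapunov-type inequality) Suppose q: (a,b) → ℝ is measurable and nonnegative with t ↦ ψ'(t)q(t) in L¹(a,b), φ: ℝ → (0,∞) is nondecreasing and concave, |f(t,x)| ≤ q(t)·φ(|x|) for all t ∈ (a,b) and x ∈ ℝ, and |𝒢(x)| ≤ κ·‖x‖ for all x ∈ C([a,b],ℝ) with some κ ∈ (0,1). If the problem has a nontrivial mild solution x (i.e., x is not identically zero) such that t ↦ f(t,x(t)) is measurable on (a,b), then ∫_a^b ψ'(τ)q(τ) dτ ≥ ((1−κ)/G_max) · ‖x‖/φ(‖x‖), where G_max = L^{α+β−1}/Γ(α+β). -/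
open MeasureTheory Set

/-! The value `G τ t` is a difference of two numbers between `0` and the value
`K = L ^ (α + β - 1) / Γ(α + β)` of the fractional kernel at the endpoints, so `|G| ≤ K`. Taking
the supremum over `t` in the integral equation, where the boundary weight lies in `[0, 1]` and
`|f τ (x τ)| ≤ q τ * φ ‖x‖`, gives `‖x‖ ≤ κ ‖x‖ + K φ(‖x‖) ∫ ψ' q`, which is the claim
rearranged. -/

section SupNorm

variable {a b C t : ℝ} {x : ℝ → ℝ}

theorem supNorm_nonneg : 0 ≤ supNorm a b x :=
  Real.iSup_nonneg fun _ => abs_nonneg _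

end SupNorm

/-- The kernel of the `ψ`-Riemann–Liouville fractional integral of order `γ`, without the density
`ψ'`. Its value at the endpoints, for `γ = α + β`, is the constant `G_max`. -/
noncomputable def fractionalKernel (ψ : ℝ → ℝ) (γ τ t : ℝ) : ℝ :=
  (ψ t - ψ τ) ^ (γ - 1) / Real.Gamma γ

/-- The coefficient of the boundary value `x b` in the integral equation. -/
noncomputable def boundaryWeight (a b β : ℝ) (ψ : ℝ → ℝ) (t : ℝ) : ℝ :=
  ((ψ t - ψ a) / (ψ b - ψ a)) ^ β

/-- Mild solutions of the boundary value problem with nonlinearity `f` and boundary functional `𝒢`;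
`ψd` stands for the derivative of `ψ`. Measurability of `t ↦ f t (x t)` is part of the notion, as
otherwise the integral would have the junk value `0`. -/
structure IsMildSolution_s7 (a b α β : ℝ) (ψ ψd : ℝ → ℝ) (f : ℝ → ℝ → ℝ) (𝒢 : (ℝ → ℝ) → ℝ)
    (x : ℝ → ℝ) : Prop where
  continuousOn : ContinuousOn x (Icc a b)
  aestronglyMeasurable :
    AEStronglyMeasurable (fun t => f t (x t)) (volume.restrict (Ioo a b))
  eq_add_integral : ∀ t ∈ Icc a b,
    x t = boundaryWeight a b β ψ t * 𝒢 x + ∫ τ in a..b, G a b α β ψ τ t * ψd τ * f τ (x τ)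

section Kernel

variable {a b γ τ t : ℝ} {ψ : ℝ → ℝ}

theorem fractionalKernel_nonneg (hγ : 0 ≤ γ) (h : ψ τ ≤ ψ t) : 0 ≤ fractionalKernel ψ γ τ t :=
  div_nonneg (Real.rpow_nonneg (sub_nonneg.2 h) _) (Real.Gamma_nonneg_of_nonneg hγ)

theorem fractionalKernel_pos (hγ : 0 < γ) (h : ψ τ < ψ t) : 0 < fractionalKernel ψ γ τ t :=
  div_pos (Real.rpow_pos_of_pos (sub_pos.2 h) _) (Real.Gamma_pos_of_pos hγ)

theorem fractionalKernel_le_fractionalKernel (hγ : 1 ≤ γ) (ha : ψ a ≤ ψ τ) (h : ψ τ ≤ ψ t)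
    (hb : ψ t ≤ ψ b) : fractionalKernel ψ γ τ t ≤ fractionalKernel ψ γ a b :=
  div_le_div_of_nonneg_right
    (Real.rpow_le_rpow (sub_nonneg.2 h) (sub_le_sub hb ha) (sub_nonneg.2 hγ))
    (Real.Gamma_nonneg_of_nonneg (zero_le_one.trans hγ))

end Kernel

section Green

variable {a b α β : ℝ} {ψ : ℝ → ℝ} {τ t : ℝ}

theorem boundaryWeight_mem_Icc (hβ : 0 ≤ β) (ha : ψ a ≤ ψ t) (hb : ψ t ≤ ψ b) :
    boundaryWeight a b β ψ t ∈ Icc 0 1 := by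
  have hL : 0 ≤ ψ b - ψ a := sub_nonneg.2 (ha.trans hb)
  have hratio : 0 ≤ (ψ t - ψ a) / (ψ b - ψ a) := div_nonneg (sub_nonneg.2 ha) hL
  exact ⟨Real.rpow_nonneg hratio _,
    Real.rpow_le_one hratio (div_le_one_of_le₀ (sub_le_sub_right hb _) hL) hβ⟩

theorem G_eq_boundaryWeight_mul_sub (ha : ψ a ≤ ψ t) (hb : ψ t ≤ ψ b) :
    G a b α β ψ τ t = boundaryWeight a b β ψ t * fractionalKernel ψ (α + β) τ b -
      if τ ≤ t then fractionalKernel ψ (α + β) τ t else 0 := by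
  have hweight : boundaryWeight a b β ψ t = (ψ t - ψ a) ^ β / (ψ b - ψ a) ^ β :=
    Real.div_rpow (sub_nonneg.2 ha) (sub_nonneg.2 (ha.trans hb)) β
  rw [hweight, fractionalKernel, fractionalKernel, div_mul_div_comm,
    mul_comm ((ψ b - ψ a) ^ β), G]
  split_ifs
  · rfl
  · rw [sub_zero]

theorem abs_G_le_fractionalKernel (hψ : MonotoneOn ψ (Icc a b)) (hβ : 0 ≤ β) (hαβ : 1 ≤ α + β)
    (hτ : τ ∈ Icc a b) (ht : t ∈ Icc a b) :
    |G a b α β ψ τ t| ≤ fractionalKernel ψ (α + β) a b := by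
  have ha : a ∈ Icc a b := left_mem_Icc.2 (ht.1.trans ht.2)
  have hb : b ∈ Icc a b := right_mem_Icc.2 (ht.1.trans ht.2)
  have hγ : 0 ≤ α + β := zero_le_one.trans hαβ
  have haτ : ψ a ≤ ψ τ := hψ ha hτ hτ.1
  have hτb : ψ τ ≤ ψ b := hψ hτ hb hτ.2
  have hat : ψ a ≤ ψ t := hψ ha ht ht.1
  have htb : ψ t ≤ ψ b := hψ ht hb ht.2
  have hw := boundaryWeight_mem_Icc hβ hat htb
  have hK : 0 ≤ fractionalKernel ψ (α + β) τ b := fractionalKernel_nonneg hγ hτb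
  rw [G_eq_boundaryWeight_mul_sub hat htb]
  refine abs_sub_le_of_nonneg_of_le (mul_nonneg hw.1 hK) ?_ ?_ ?_
  · exact (mul_le_of_le_one_left hK hw.2).trans
      (fractionalKernel_le_fractionalKernel hαβ haτ hτb le_rfl)
  · split_ifs with h
    · exact fractionalKernel_nonneg hγ (hψ hτ ht h)
    · exact le_rfl
  · split_ifs with h
    · exact fractionalKernel_le_fractionalKernel hαβ haτ (hψ hτ ht h) htb
    · exact fractionalKernel_nonneg hγ (haτ.trans hτb)

theorem abs_integral_G_mul_le {C : ℝ} {ψd q g : ℝ → ℝ} (hψ : MonotoneOn ψ (Icc a b))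
    (hβ : 0 ≤ β) (hαβ : 1 ≤ α + β) (hψd : ∀ τ ∈ Ioo a b, 0 ≤ ψd τ)
    (hq : IntervalIntegrable (fun τ => ψd τ * q τ) volume a b)
    (hg : ∀ τ ∈ Ioo a b, |g τ| ≤ q τ * C) (ht : t ∈ Icc a b) :
    |∫ τ in a..b, G a b α β ψ τ t * ψd τ * g τ| ≤
      fractionalKernel ψ (α + β) a b * C * ∫ τ in a..b, ψd τ * q τ := by
  have hbound : ∀ τ ∈ Ioo a b, |G a b α β ψ τ t * ψd τ * g τ| ≤
      fractionalKernel ψ (α + β) a b * C * (ψd τ * q τ) := fun τ hτ =>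
    have hG := abs_G_le_fractionalKernel hψ hβ hαβ (Ioo_subset_Icc_self hτ) ht
    calc |G a b α β ψ τ t * ψd τ * g τ|
        = |G a b α β ψ τ t| * ψd τ * |g τ| := by
          rw [abs_mul, abs_mul, abs_of_nonneg (hψd τ hτ)]
      _ ≤ fractionalKernel ψ (α + β) a b * ψd τ * (q τ * C) :=
          mul_le_mul (mul_le_mul_of_nonneg_right hG (hψd τ hτ)) (hg τ hτ) (abs_nonneg _)
            (mul_nonneg ((abs_nonneg _).trans hG) (hψd τ hτ))
      _ = fractionalKernel ψ (α + β) a b * C * (ψd τ * q τ) := by ring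
  rw [← intervalIntegral.integral_const_mul, ← Real.norm_eq_abs]
  refine intervalIntegral.norm_integral_le_of_norm_le (ht.1.trans ht.2) ?_ (hq.const_mul _)
  filter_upwards [Measure.ae_ne volume b] with τ hτb hτ
  exact hbound τ ⟨hτ.1, hτ.2.lt_of_ne hτb⟩

end Green

theorem abs_le_mul_apply_of_abs_le {φ : ℝ → ℝ} (hφ : MonotoneOn φ (Ici 0)) {c u y N : ℝ}
    (hφu : 0 < φ |u|) (hy : |y| ≤ c * φ |u|) (hu : |u| ≤ N) : |y| ≤ c * φ N := by
  have hc : 0 ≤ c := nonneg_of_mul_nonneg_left ((abs_nonneg y).trans hy) hφu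
  have hmono : φ |u| ≤ φ N := hφ (abs_nonneg u) ((abs_nonneg u).trans hu) hu
  exact hy.trans (mul_le_mul_of_nonneg_left hmono hc)

theorem IsMildSolution_s7.supNorm_le_add {a b α β κ C : ℝ} {ψ ψd q x : ℝ → ℝ} {f : ℝ → ℝ → ℝ}
    {𝒢 : (ℝ → ℝ) → ℝ} (hx : IsMildSolution_s7 a b α β ψ ψd f 𝒢 x) (hab : a ≤ b)
    (hψ : MonotoneOn ψ (Icc a b)) (hβ : 0 ≤ β) (hαβ : 1 ≤ α + β)
    (hψd : ∀ t ∈ Ioo a b, 0 ≤ ψd t)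
    (hq : IntervalIntegrable (fun t => ψd t * q t) volume a b)
    (hf : ∀ t ∈ Ioo a b, |f t (x t)| ≤ q t * C) (h𝒢 : |𝒢 x| ≤ κ * supNorm a b x) :
    supNorm a b x ≤ κ * supNorm a b x +
      fractionalKernel ψ (α + β) a b * C * ∫ τ in a..b, ψd τ * q τ := by
  refine supNorm_le hab fun t ht => ?_
  have hw : boundaryWeight a b β ψ t ∈ Icc 0 1 :=
    boundaryWeight_mem_Icc hβ (hψ (left_mem_Icc.2 hab) ht ht.1) (hψ ht (right_mem_Icc.2 hab) ht.2)
  have hboundary : |boundaryWeight a b β ψ t * 𝒢 x| ≤ κ * supNorm a b x := by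
    rw [abs_mul, abs_of_nonneg hw.1]
    exact (mul_le_of_le_one_left (abs_nonneg _) hw.2).trans h𝒢
  rw [hx.eq_add_integral t ht]
  exact (abs_add_le _ _).trans <|
    add_le_add hboundary (abs_integral_G_mul_le hψ hβ hαβ hψd hq hf ht)

theorem lyapunov_type_inequality_general {a b α β κ : ℝ} (hab : a < b) (hβ : 0 ≤ β)
    (hαβ : 1 ≤ α + β) {ψ ψd : ℝ → ℝ} (hψ_cont : ContinuousOn ψ (Icc a b))
    (hψ : ∀ t ∈ Ioo a b, HasDerivAt ψ (ψd t) t) (hψd_pos : ∀ t ∈ Ioo a b, 0 < ψd t)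
    {q φ : ℝ → ℝ} {f : ℝ → ℝ → ℝ} {𝒢 : (ℝ → ℝ) → ℝ}
    (hqL1 : IntervalIntegrable (fun t => ψd t * q t) volume a b)
    (hφ_pos : ∀ s, 0 ≤ s → 0 < φ s) (hφ_mono : MonotoneOn φ (Ici 0))
    (hf : ∀ t ∈ Ioo a b, ∀ u : ℝ, |f t u| ≤ q t * φ |u|)
    {x : ℝ → ℝ} (hx : IsMildSolution_s7 a b α β ψ ψd f 𝒢 x) (h𝒢 : |𝒢 x| ≤ κ * supNorm a b x) :
    (1 - κ) / fractionalKernel ψ (α + β) a b * (supNorm a b x / φ (supNorm a b x)) ≤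
      ∫ τ in a..b, ψd τ * q τ := by
  have hψ_mono : StrictMonoOn ψ (Icc a b) :=
    strictMonoOn_of_hasDerivWithinAt_pos (convex_Icc a b) hψ_cont
      (by simpa only [interior_Icc] using fun t ht => (hψ t ht).hasDerivWithinAt)
      (by simpa only [interior_Icc] using hψd_pos)
  have hK : 0 < fractionalKernel ψ (α + β) a b :=
    fractionalKernel_pos (zero_lt_one.trans_le hαβ)
      (hψ_mono (left_mem_Icc.2 hab.le) (right_mem_Icc.2 hab.le) hab)
  have hforcing : ∀ t ∈ Ioo a b, |f t (x t)| ≤ q t * φ (supNorm a b x) := fun t ht =>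
    abs_le_mul_apply_of_abs_le hφ_mono (hφ_pos _ (abs_nonneg _)) (hf t ht _)
      (abs_le_supNorm hx.continuousOn (Ioo_subset_Icc_self ht))
  have hbound := hx.supNorm_le_add hab.le hψ_mono.monotoneOn hβ hαβ
    (fun t ht => (hψd_pos t ht).le) hqL1 hforcing h𝒢
  rw [div_mul_div_comm, div_le_iff₀ (mul_pos hK (hφ_pos _ supNorm_nonneg))]
  linarith

theorem lyapunov_type_inequality
    (a b α β κ : ℝ) (hab : a < b)
    (hα0 : 0 < α) (hα1 : α ≤ 1) (hβ0 : 0 < β) (hβ1 : β ≤ 1) (hαβ : 1 < α + β)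
    (ψ ψd : ℝ → ℝ)
    (hψ : ∀ t ∈ Set.Icc a b, HasDerivAt ψ (ψd t) t)
    (hψd_cont : ContinuousOn ψd (Set.Icc a b))
    (hψd_pos : ∀ t ∈ Set.Icc a b, 0 < ψd t)
    (q φ : ℝ → ℝ) (f : ℝ → ℝ → ℝ) (𝒢 : (ℝ → ℝ) → ℝ)
    (hq_meas : AEStronglyMeasurable q (volume.restrict (Set.Ioo a b)))
    (hq_nonneg : ∀ t ∈ Set.Ioo a b, 0 ≤ q t)
    (hqL1 : IntervalIntegrable (fun t => ψd t * q t) volume a b)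
    (hφ_pos : ∀ s, 0 < φ s) (hφ_mono : Monotone φ)
    (hφ_concave : ConcaveOn ℝ Set.univ φ)
    (hf : ∀ t ∈ Set.Ioo a b, ∀ u : ℝ, |f t u| ≤ q t * φ |u|)
    (hκ0 : 0 < κ) (hκ1 : κ < 1)
    (h𝒢 : ∀ x : ℝ → ℝ, ContinuousOn x (Set.Icc a b) → |𝒢 x| ≤ κ * supNorm a b x)
    (x : ℝ → ℝ) (hx_cont : ContinuousOn x (Set.Icc a b))
    (hfx_meas : AEStronglyMeasurable (fun t => f t (x t)) (volume.restrict (Set.Ioo a b)))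
    (hmild : ∀ t ∈ Set.Icc a b,
      x t = ((ψ t - ψ a) / (ψ b - ψ a)) ^ β * 𝒢 x +
        ∫ τ in a..b, G a b α β ψ τ t * ψd τ * f τ (x τ))
    (hx_nontrivial : ∃ t ∈ Set.Icc a b, x t ≠ 0) :
    ∫ τ in a..b, ψd τ * q τ ≥
      (1 - κ) / ((ψ b - ψ a) ^ (α + β - 1) / Real.Gamma (α + β)) *
        (supNorm a b x / φ (supNorm a b x)) :=
  lyapunov_type_inequality_general hab hβ0.le hαβ.le
    (fun t ht => (hψ t ht).continuousAt.continuousWithinAt)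
    (fun t ht => hψ t (Ioo_subset_Icc_self ht)) (fun t ht => hψd_pos t (Ioo_subset_Icc_self ht))
    hqL1 (fun s _ => hφ_pos s) (hφ_mono.monotoneOn _) hf ⟨hx_cont, hfx_meas, hmild⟩ (h𝒢 x hx_cont)
end
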